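/- Fix an integer d ≥ 2 and θ ∈ ℝ. For each integer n ≥ 1 set T_d(n) = ((d−1)/(2d))·log n and t_n = T_d(n) + θ, and let p_n = exp(−d·t_n/(d−1)) = n^{−1/2}·e^{−dθ/(d−1)}. For n large enough that t_n ≥ 0, define the probability mass function μ_n on functions x : Fin n → Fin d by μ_n(x) = ∏_{i=1}^{n} q_n(x(i)), where q_n(0) = (1 + (d−1)p_n)/d and q_n(j) = (1 − p_n)/d for j ≠ 0, and let π_n be the uniform distribution on Fin n → Fin d, π_n(x) = d^{−n}. Then the total variation distance (1/2)·Σ_x |μ_n(x) − d^{−n}| converges, as n → ∞, to 2·Φ((√(d−1)/2)·e^{−dθ/(d−1)}) − 1, where Φ is the cumulative distribution function of the standard normal distribution. -/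

import Mathlib

open Filter

/-- The standard normal cumulative distribution function. -/
noncomputable def stdNormalCDF (x : ℝ) : ℝ :=
  ∫ t in Set.Iic x, Real.exp (-t ^ 2 / 2) / Real.sqrt (2 * Real.pi)

open MeasureTheory ProbabilityTheory Topology

/-- second order log asymptotics along a sequence -/
lemma cut_log2 (u : ℕ → ℝ) (s : ℝ) (hu : Tendsto u atTop (𝓝 0))
    (hs : Tendsto (fun n : ℕ => √(n : ℝ) * u n) atTop (𝓝 s)) :
    Tendsto (fun n : ℕ => (n : ℝ) * (Real.log (1 + u n) - u n)) atTop (𝓝 (-s ^ 2 / 2)) := by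
  have h2 : Tendsto (fun n : ℕ => (√(n : ℝ) * u n) ^ 2) atTop (𝓝 (s ^ 2)) := hs.pow 2
  have h3 : Tendsto (fun n : ℕ => (√(n : ℝ) * u n) ^ 2 * (|u n| / (1 - |u n|))) atTop (𝓝 0) := by
    have ha : Tendsto (fun n : ℕ => |u n|) atTop (𝓝 0) := by simpa using hu.abs
    have hb : Tendsto (fun n : ℕ => |u n| / (1 - |u n|)) atTop (𝓝 0) := by
      have hc := ha.div (tendsto_const_nhds.sub ha) (by norm_num : (1 : ℝ) - 0 ≠ 0)
      rw [zero_div] at hc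
      exact hc
    simpa using h2.mul hb
  have h4 : Tendsto (fun n : ℕ => (n : ℝ) * (Real.log (1 + u n) - u n)
      + (√(n : ℝ) * u n) ^ 2 / 2) atTop (𝓝 0) := by
    refine squeeze_zero_norm' ?_ h3
    have hlt : ∀ᶠ n in atTop, |u n| < 1 := by
      have ha : Tendsto (fun n : ℕ => |u n|) atTop (𝓝 0) := by simpa using hu.abs
      exact ha.eventually_lt_const one_pos
    filter_upwards [hlt] with n hn
    have hb := Real.abs_log_sub_add_sum_range_le (x := -u n) (by simpa using hn) 2
    simp only [Finset.sum_range_succ, Finset.sum_range_zero, abs_neg] at hb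
    norm_num at hb
    have hsq : (√(n : ℝ)) ^ 2 = n := Real.sq_sqrt (Nat.cast_nonneg n)
    have : (n : ℝ) * (Real.log (1 + u n) - u n) + (√(n : ℝ) * u n) ^ 2 / 2
        = n * (-u n + u n ^ 2 / 2 + Real.log (1 + u n)) := by
      rw [mul_pow, hsq]; ring
    rw [this, Real.norm_eq_abs, abs_mul, abs_of_nonneg (Nat.cast_nonneg n : (0 : ℝ) ≤ n)]
    calc (n : ℝ) * |(-u n + u n ^ 2 / 2 + Real.log (1 + u n))|
        ≤ n * (|u n| ^ 3 / (1 - |u n|)) := by gcongr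
      _ = _ := by rw [mul_pow, hsq, ← sq_abs (u n)]; ring
  have h5 := h4.sub (h2.div_const 2)
  refine (h5.congr fun n => by ring).trans (by rw [show 0 - s ^ 2 / 2 = -s ^ 2 / 2 by ring])

lemma cut_log1 (u : ℕ → ℝ) (s : ℝ) (hu : Tendsto u atTop (𝓝 0))
    (hs : Tendsto (fun n : ℕ => √(n : ℝ) * u n) atTop (𝓝 s)) :
    Tendsto (fun n : ℕ => √(n : ℝ) * Real.log (1 + u n)) atTop (𝓝 s) := by
  have h := cut_log2 u s hu hs
  have hi : Tendsto (fun n : ℕ => (√(n : ℝ))⁻¹) atTop (𝓝 0) :=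
    tendsto_inv_atTop_zero.comp (Real.tendsto_sqrt_atTop.comp tendsto_natCast_atTop_atTop)
  have h2 := hs.add (hi.mul h)
  simp only [zero_mul, add_zero] at h2
  refine h2.congr' ?_
  filter_upwards [eventually_gt_atTop 0] with n hn
  have hn' : (0 : ℝ) < n := by exact_mod_cast hn
  have hsq : (√(n : ℝ)) ^ 2 = n := Real.sq_sqrt hn'.le
  have hp : 0 < √(n : ℝ) := Real.sqrt_pos.2 hn'
  generalize √(n : ℝ) = r at *
  rw [← hsq]
  field_simp
  ring

lemma cut_density (y : ℝ) :
    gaussianPDFReal 0 1 y = Real.exp (-y ^ 2 / 2) / Real.sqrt (2 * Real.pi) := by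
  simp [gaussianPDFReal]; ring

lemma cut_density_integrable :
    Integrable (fun y : ℝ => Real.exp (-y ^ 2 / 2) / Real.sqrt (2 * Real.pi)) := by
  simpa only [← cut_density] using integrable_gaussianPDFReal 0 1

lemma cut_density_integral :
    ∫ y : ℝ, Real.exp (-y ^ 2 / 2) / Real.sqrt (2 * Real.pi) = 1 := by
  simpa only [← cut_density] using integral_gaussianPDFReal_eq_one 0 (v := 1) one_ne_zero

lemma cut_cdf_neg (x : ℝ) : stdNormalCDF (-x) = 1 - stdNormalCDF x := by
  unfold stdNormalCDF
  have h1 := integral_comp_neg_Iic (-x) (fun t : ℝ => Real.exp (-t ^ 2 / 2) / Real.sqrt (2 * Real.pi))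
  simp only [even_two, Even.neg_pow, neg_neg] at h1
  rw [h1, ← cut_density_integral]
  have := integral_add_compl (measurableSet_Iic (a := x)) cut_density_integrable
  rw [Set.compl_Iic] at this
  linarith

lemma cut_gauss (σ : ℝ) (hσ : 0 < σ) :
    ∫ y, (1 - Real.exp (min (σ * y + -σ ^ 2 / 2) 0)) ∂(gaussianReal 0 1)
      = 2 * stdNormalCDF (σ / 2) - 1 := by
  rw [integral_gaussianReal_eq_integral_smul one_ne_zero]
  have hI : ∀ y : ℝ, gaussianPDFReal 0 1 y • (1 - Real.exp (min (σ * y + -σ ^ 2 / 2) 0))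
      = (Set.Iic (σ / 2)).indicator (fun y => Real.exp (-y ^ 2 / 2) / Real.sqrt (2 * Real.pi)
        - Real.exp (-(y - σ) ^ 2 / 2) / Real.sqrt (2 * Real.pi)) y := by
    intro y
    rw [cut_density, smul_eq_mul]
    by_cases hy : y ≤ σ / 2
    · rw [Set.indicator_of_mem (by exact hy), min_eq_left (by nlinarith)]
      have : Real.exp (-(y - σ) ^ 2 / 2)
          = Real.exp (-y ^ 2 / 2) * Real.exp (σ * y + -σ ^ 2 / 2) := by
        rw [← Real.exp_add]; congr 1; ring
      rw [this]; ring
    · rw [Set.indicator_of_notMem (by simpa using hy), min_eq_right (by nlinarith)]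
      simp
  simp_rw [hI]
  rw [integral_indicator measurableSet_Iic, integral_sub cut_density_integrable.integrableOn
    (cut_density_integrable.comp_sub_right σ).integrableOn]
  have h2 : ∫ y in Set.Iic (σ / 2), Real.exp (-(y - σ) ^ 2 / 2) / Real.sqrt (2 * Real.pi)
      = stdNormalCDF (-(σ / 2)) := by
    unfold stdNormalCDF
    rw [← integral_indicator measurableSet_Iic, ← integral_indicator measurableSet_Iic,
      ← integral_sub_right_eq_self ((Set.Iic (-(σ / 2))).indicator _) σ]
    refine integral_congr_ae (.of_forall fun y => ?_)
    have hiff : y ≤ σ / 2 ↔ y - σ ≤ -(σ / 2) := by constructor <;> intro h <;> linarith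
    simp only [Set.indicator_apply, Set.mem_Iic, hiff]
  rw [h2, cut_cdf_neg]
  unfold stdNormalCDF
  ring

/-- expectation of a function of the first n coordinates of a uniform iid sequence -/
lemma cut_expect {d : ℕ} [NeZero d] {Ω : Type} [MeasurableSpace Ω] (P : Measure Ω)
    [IsProbabilityMeasure P] (X : ℕ → Ω → Fin d)
    (hm : ∀ i, Measurable (X i))
    (hl : ∀ i, HasLaw (X i) (PMF.uniformOfFintype (Fin d)).toMeasure P)
    (hi : iIndepFun X P) (n : ℕ) (f : (Fin n → Fin d) → ℝ) :
    ∫ ω, f (fun i => X i ω) ∂P = ∑ x, ((d : ℝ) ^ n)⁻¹ * f x := by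
  have h1 : iIndepFun (fun i : Fin n => X i) P := hi.precomp Fin.val_injective
  have h2 := (iIndepFun_iff_map_fun_eq_pi_map (fun i : Fin n => (hm i).aemeasurable)).1 h1
  have h3 : ∫ ω, f (fun i => X i ω) ∂P = ∫ x, f x ∂(P.map (fun ω (i : Fin n) => X i ω)) := by
    rw [integral_map]
    · exact (measurable_pi_lambda _ fun i : Fin n => hm i).aemeasurable
    · exact (measurable_of_finite f).aestronglyMeasurable
  rw [h3, h2]
  simp_rw [(hl _).map_eq]
  rw [integral_fintype Integrable.of_finite]
  refine Finset.sum_congr rfl fun x _ => ?_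
  rw [smul_eq_mul]
  congr 1
  rw [measureReal_def, Measure.pi_singleton]
  simp

lemma cut_limit {Ω : Type} [MeasurableSpace Ω] (P : Measure Ω)
    [IsProbabilityMeasure P] (X : ℕ → Ω → ℝ) (h0 : P[X 0] = 0) (h1 : P[X 0 ^ 2] = 1)
    (hindep : iIndepFun X P) (hident : ∀ (i : ℕ), IdentDistrib (X i) (X 0) P P)
    (a b : ℕ → ℝ) (σ : ℝ) (hσ : 0 < σ) (ha : Tendsto a atTop (𝓝 σ))
    (hb : Tendsto b atTop (𝓝 (-σ ^ 2 / 2))) :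
    Tendsto (fun n : ℕ => ∫ ω, (1 - Real.exp (min (a n * ((√(n : ℝ))⁻¹ *
      ∑ k ∈ Finset.range n, X k ω) + b n) 0)) ∂P) atTop (𝓝 (2 * stdNormalCDF (σ / 2) - 1)) := by
  have hc := tendstoInDistribution_inv_sqrt_mul_sum (P := P) (P' := gaussianReal 0 1) (Y := id)
    HasLaw.id h0 h1 hindep hident
  have hY : TendstoInMeasure P (fun n (_ : Ω) => (a n, b n)) atTop (fun _ => (σ, -σ ^ 2 / 2)) :=
    tendstoInMeasure_of_tendsto_ae (fun n => aestronglyMeasurable_const)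
      (.of_forall fun _ => ha.prodMk_nhds hb)
  have hs := hc.continuous_comp_prodMk_of_tendstoInMeasure_const
    (g := fun z : ℝ × (ℝ × ℝ) => z.2.1 * z.1 + z.2.2) (by fun_prop) hY
    (fun _ => aemeasurable_const)
  let g : BoundedContinuousFunction ℝ ℝ := BoundedContinuousFunction.ofNormedAddCommGroup
    (fun y : ℝ => 1 - Real.exp (min y 0)) (by fun_prop) 1 (by
      intro y
      have h1 : Real.exp (min y 0) ≤ 1 := Real.exp_le_one_iff.2 (min_le_right _ _)
      have h2 := Real.exp_pos (min y 0)
      rw [Real.norm_eq_abs, abs_le]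
      constructor <;> linarith)
  have ht := ProbabilityMeasure.tendsto_iff_forall_integral_tendsto.1 hs.tendsto g
  rw [← cut_gauss σ hσ]
  have hgc : Continuous (fun y : ℝ => 1 - Real.exp (min y 0)) := by fun_prop
  convert ht using 1
  · funext n
    exact (integral_map (hs.forall_aemeasurable n) hgc.aestronglyMeasurable).symm
  · congr 1
    exact (integral_map hs.aemeasurable_limit hgc.aestronglyMeasurable).symm

lemma cut_sum_fin {d : ℕ} (hd : 2 ≤ d) (A B : ℝ) :
    ∑ j : Fin d, (if (j : ℕ) = 0 then A else B) = A + ((d : ℝ) - 1) * B := by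
  obtain ⟨m, rfl⟩ : ∃ m, d = m + 1 := ⟨d - 1, by omega⟩
  rw [Fin.sum_univ_succ]
  simp

theorem tv_cutoff_complete_graph_product (d : ℕ) (hd : 2 ≤ d) (θ : ℝ)
    (p : ℕ → ℝ)
    (hp : ∀ n : ℕ, p n =
      Real.exp (-((d : ℝ) * (((d : ℝ) - 1) / (2 * (d : ℝ)) * Real.log n + θ)) / ((d : ℝ) - 1)))
    (q : ℕ → Fin d → ℝ)
    (hq : ∀ (n : ℕ) (j : Fin d), q n j =
      if (j : ℕ) = 0 then (1 + ((d : ℝ) - 1) * p n) / (d : ℝ) else (1 - p n) / (d : ℝ)) :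
    Tendsto
      (fun n : ℕ =>
        (1 / 2 : ℝ) * ∑ x : Fin n → Fin d, |(∏ i : Fin n, q n (x i)) - ((d : ℝ) ^ n)⁻¹|)
      atTop
      (nhds (2 * stdNormalCDF
          (Real.sqrt ((d : ℝ) - 1) / 2 * Real.exp (-((d : ℝ) * θ) / ((d : ℝ) - 1))) - 1)) := by
  have : NeZero d := ⟨by omega⟩
  have hd2 : (2 : ℝ) ≤ d := by exact_mod_cast hd
  have hd0 : (d : ℝ) ≠ 0 := by positivity
  have hd1 : (0 : ℝ) < (d : ℝ) - 1 := by linarith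
  set c : ℝ := Real.exp (-((d : ℝ) * θ) / ((d : ℝ) - 1)) with hc
  set e : ℝ := √((d : ℝ) - 1) with he
  have hc0 : 0 < c := Real.exp_pos _
  have he0 : 0 < e := Real.sqrt_pos.2 hd1
  have he2 : e ^ 2 = (d : ℝ) - 1 := Real.sq_sqrt hd1.le
  have hpn : ∀ n : ℕ, 0 < n → p n = (√(n : ℝ))⁻¹ * c := by
    intro n hn
    have hn' : (0 : ℝ) < n := by exact_mod_cast hn
    have : (√(n : ℝ))⁻¹ = Real.exp (-(Real.log n / 2)) := by
      rw [Real.exp_neg, ← Real.log_sqrt hn'.le, Real.exp_log (Real.sqrt_pos.2 hn')]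
    rw [hp, this, hc, ← Real.exp_add]
    congr 1
    have := hd1.ne'
    field_simp
    ring
  have hsp : Tendsto (fun n : ℕ => √(n : ℝ) * p n) atTop (𝓝 c) := by
    refine tendsto_const_nhds.congr' ?_
    filter_upwards [eventually_gt_atTop 0] with n hn
    have hn' : (0 : ℝ) < √(n : ℝ) := Real.sqrt_pos.2 (by exact_mod_cast hn)
    rw [hpn n hn, mul_inv_cancel_left₀ hn'.ne']
  have hp0 : Tendsto p atTop (𝓝 0) := by
    have hi : Tendsto (fun n : ℕ => (√(n : ℝ))⁻¹ * c) atTop (𝓝 (0 * c)) :=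
      (tendsto_inv_atTop_zero.comp
        (Real.tendsto_sqrt_atTop.comp tendsto_natCast_atTop_atTop)).mul_const c
    rw [zero_mul] at hi
    refine hi.congr' ?_
    filter_upwards [eventually_gt_atTop 0] with n hn
    rw [hpn n hn]
  have hu1 : Tendsto (fun n => ((d : ℝ) - 1) * p n) atTop (𝓝 0) := by
    simpa using hp0.const_mul ((d : ℝ) - 1)
  have hu2 : Tendsto (fun n => - p n) atTop (𝓝 0) := by simpa using hp0.neg
  have hs1 : Tendsto (fun n : ℕ => √(n : ℝ) * (((d : ℝ) - 1) * p n)) atTop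
      (𝓝 (((d : ℝ) - 1) * c)) :=
    (hsp.const_mul ((d : ℝ) - 1)).congr fun n => by ring
  have hs2 : Tendsto (fun n : ℕ => √(n : ℝ) * (-p n)) atTop (𝓝 (-c)) :=
    hsp.neg.congr fun n => by ring
  let l1 : ℕ → ℝ := fun n => Real.log (1 + ((d : ℝ) - 1) * p n)
  let l2 : ℕ → ℝ := fun n => Real.log (1 + - p n)
  let a : ℕ → ℝ := fun n => e / d * (√(n : ℝ) * l1 n - √(n : ℝ) * l2 n)
  let b : ℕ → ℝ := fun n => (n : ℝ) / d * (l1 n + ((d : ℝ) - 1) * l2 n)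
  have ha : Tendsto a atTop (𝓝 (e * c)) := by
    have h := ((cut_log1 _ _ hu1 hs1).sub (cut_log1 _ _ hu2 hs2)).const_mul (e / d)
    have hlim : e / d * (((d : ℝ) - 1) * c - -c) = e * c := by field_simp; ring
    rw [hlim] at h
    exact h
  have hb : Tendsto b atTop (𝓝 (-(e * c) ^ 2 / 2)) := by
    have h := ((cut_log2 _ _ hu1 hs1).add
      ((cut_log2 _ _ hu2 hs2).const_mul ((d : ℝ) - 1))).const_mul (1 / (d : ℝ))
    have hlim : 1 / (d : ℝ) * (-(((d : ℝ) - 1) * c) ^ 2 / 2 + ((d : ℝ) - 1) * (-(-c) ^ 2 / 2))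
        = -(e * c) ^ 2 / 2 := by rw [mul_pow e, he2]; field_simp; ring
    rw [hlim] at h
    refine h.congr fun n => ?_
    simp only [b, l1, l2]
    ring
  -- the score function
  let ξ : Fin d → ℝ := fun j => if (j : ℕ) = 0 then e else -e⁻¹
  obtain ⟨Ω, mΩ, P, X, hXm, hXl, hXi, hP⟩ :=
    exists_iid ℕ (PMF.uniformOfFintype (Fin d)).toMeasure
  have hξm : Measurable ξ := measurable_of_finite ξ
  have hident : ∀ i, IdentDistrib (ξ ∘ X i) (ξ ∘ X 0) P P := fun i =>
    ((hXl i).identDistrib (hXl 0)).comp hξm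
  have h0 : ∫ ω, (ξ ∘ X 0) ω ∂P = 0 := by
    rw [(hXl 0).integral_comp hξm.aestronglyMeasurable, PMF.integral_eq_sum]
    simp only [PMF.uniformOfFintype_apply, smul_eq_mul, ← Finset.mul_sum, ξ]
    rw [cut_sum_fin hd, ← he2]
    have := he0.ne'
    field_simp
    simp
  have h1 : ∫ ω, ((ξ ∘ X 0) ^ 2) ω ∂P = 1 := by
    have : (ξ ∘ X 0) ^ 2 = (fun j => ξ j ^ 2) ∘ X 0 := rfl
    rw [this, (hXl 0).integral_comp (measurable_of_finite _).aestronglyMeasurable,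
      PMF.integral_eq_sum]
    simp only [PMF.uniformOfFintype_apply, smul_eq_mul, ← Finset.mul_sum, ξ, ite_pow]
    rw [cut_sum_fin hd]
    simp only [neg_sq, inv_pow, he2, Fintype.card_fin, ENNReal.toReal_inv, ENNReal.toReal_natCast]
    field_simp
    ring
  have hlim := cut_limit P (fun i => ξ ∘ X i) h0 h1 (hXi.comp _ fun _ => hξm) hident a b (e * c)
    (mul_pos he0 hc0) ha hb
  rw [show e * c / 2 = e / 2 * c by ring] at hlim
  refine hlim.congr' ?_
  filter_upwards [hp0.eventually_lt_const one_pos, eventually_gt_atTop 0] with n hn1 hn0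
  have hn' : (0 : ℝ) < n := by exact_mod_cast hn0
  have hpp : 0 < p n := by rw [hp]; exact Real.exp_pos _
  let W : (Fin n → Fin d) → ℝ := fun x => a n * ((√(n : ℝ))⁻¹ * ∑ k, ξ (x k)) + b n
  have hE := cut_expect P X hXm hXl hXi n (fun x => 1 - Real.exp (min (W x) 0))
  have hprod : ∀ x : Fin n → Fin d, ∏ i, q n (x i) = ((d : ℝ) ^ n)⁻¹ * Real.exp (W x) := by
    intro x
    have hW : W x = ∑ k, (e / d * (l1 n - l2 n) * ξ (x k) + (l1 n + ((d : ℝ) - 1) * l2 n) / d) := by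
      rw [Finset.sum_add_distrib, ← Finset.mul_sum]
      simp only [W, a, b, Finset.sum_const, Finset.card_univ, Fintype.card_fin, nsmul_eq_mul]
      have : √(n : ℝ) ≠ 0 := (Real.sqrt_pos.2 hn').ne'
      field_simp
    have hcst : ((d : ℝ) ^ n)⁻¹ = ∏ _k : Fin n, (d : ℝ)⁻¹ := by simp
    rw [hW, Real.exp_sum, hcst, ← Finset.prod_mul_distrib]
    refine Finset.prod_congr rfl fun k _ => ?_
    rw [hq]
    simp only [ξ]
    split_ifs with h
    · have : e / d * (l1 n - l2 n) * e + (l1 n + ((d : ℝ) - 1) * l2 n) / d = l1 n := by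
        rw [← he2]
        have h3 : (d : ℝ) = e ^ 2 + 1 := by linarith
        field_simp
        rw [h3]; ring
      rw [this, Real.exp_log (by positivity)]
      field_simp
    · have : e / d * (l1 n - l2 n) * -e⁻¹ + (l1 n + ((d : ℝ) - 1) * l2 n) / d = l2 n := by
        field_simp
        ring
      rw [this, Real.exp_log (by linarith)]
      field_simp
      ring
  have hsum : ∑ x : Fin n → Fin d, ((d : ℝ) ^ n)⁻¹ * Real.exp (W x) = 1 := by
    simp_rw [← hprod]
    rw [← Fintype.sum_pow]
    simp_rw [hq]
    rw [cut_sum_fin hd]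
    have : (1 + ((d : ℝ) - 1) * p n) / (d : ℝ) + ((d : ℝ) - 1) * ((1 - p n) / (d : ℝ)) = 1 := by
      field_simp
      ring
    rw [this, one_pow]
  have hone : ∑ x : Fin n → Fin d, ((d : ℝ) ^ n)⁻¹ = 1 := by
    simp
  have hL : (∫ ω, (1 - Real.exp (min (a n * ((√(n : ℝ))⁻¹ *
      ∑ k ∈ Finset.range n, (ξ ∘ X k) ω) + b n) 0)) ∂P)
      = ∑ x, ((d : ℝ) ^ n)⁻¹ * (1 - Real.exp (min (W x) 0)) := by
    rw [← hE]
    simp only [W, Finset.sum_range, Function.comp]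
  rw [hL, Finset.mul_sum]
  have hpt : ∀ x : Fin n → Fin d, (1 / 2 : ℝ) * |(∏ i : Fin n, q n (x i)) - ((d : ℝ) ^ n)⁻¹|
      = ((d : ℝ) ^ n)⁻¹ * (1 - Real.exp (min (W x) 0))
        + 1 / 2 * (((d : ℝ) ^ n)⁻¹ * Real.exp (W x) - ((d : ℝ) ^ n)⁻¹) := by
    intro x
    have hdn : 0 ≤ ((d : ℝ) ^ n)⁻¹ := by positivity
    rw [hprod, show ((d : ℝ) ^ n)⁻¹ * Real.exp (W x) - ((d : ℝ) ^ n)⁻¹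
      = ((d : ℝ) ^ n)⁻¹ * (Real.exp (W x) - 1) by ring, abs_mul, abs_of_nonneg hdn]
    rcases le_total (W x) 0 with h | h
    · rw [min_eq_left h, abs_of_nonpos (by linarith [Real.exp_le_one_iff.2 h])]; ring
    · rw [min_eq_right h, abs_of_nonneg (by linarith [Real.one_le_exp h]), Real.exp_zero]; ring
  simp_rw [hpt]
  have hz : ∑ x : Fin n → Fin d,
      1 / 2 * (((d : ℝ) ^ n)⁻¹ * Real.exp (W x) - ((d : ℝ) ^ n)⁻¹) = 0 := by
    rw [← Finset.mul_sum, Finset.sum_sub_distrib, hsum, hone]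
    norm_num
  rw [Finset.sum_add_distrib, hz, add_zero]
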